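/- arXiv:2406.01351 — 3 statements merged into one kernel-verified Lean document; each statement's English description precedes it below -/
import Mathlib

section
/- Let Ω ⊆ ℝ² be open and let ψ : ℝ² → ℝ be smooth, compactly supported with support contained in Ω, and not identically zero. Define the vector field u = (∂₂ψ, −∂₁ψ). Then: (i) u is smooth, compactly supported in Ω, not identically zero, and div u = ∂₁u₁ + ∂₂u₂ = 0 on ℝ²; (ii) ∫_Ω |u|² dx = ∫_Ω |∇ψ|² dx and this quantity is strictly positive; (iii) ∫_Ω ‖Du‖² dx = ∫_Ω (Δψ)² dx, where ‖Du‖² = Σ_{i,j} (∂ⱼuᵢ)²; consequently (∫_Ω ‖Du‖² dx)/(∫_Ω |u|² dx) = (∫_Ω (Δψ)² dx)/(∫_Ω |∇ψ|² dx). -/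
/-!
The fields `u` and `∇ψ` have the same length pointwise, and `div u = ∂₁∂₂ψ - ∂₂∂₁ψ = 0` by symmetry
of second derivatives. If `∇ψ` vanished identically, `ψ` would be constant, hence zero since it has
compact support in the noncompact plane; so `|u|²` is continuous, nonnegative and not identically
zero, with positive integral. Pointwise `‖Du‖² = (Δψ)² - 2 det D²ψ`, and two integrations by parts
show that the Hessian determinant of a compactly supported function integrates to zero, over the
plane and hence over any set containing the support.
-/

open MeasureTheory

/-- First partial derivative (with respect to the first coordinate of `ℝ × ℝ`). -/
noncomputable def pd1 (f : ℝ × ℝ → ℝ) : ℝ × ℝ → ℝ := fun x => fderiv ℝ f x (1, 0)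

/-- Second partial derivative (with respect to the second coordinate of `ℝ × ℝ`). -/
noncomputable def pd2 (f : ℝ × ℝ → ℝ) : ℝ × ℝ → ℝ := fun x => fderiv ℝ f x (0, 1)

/-- The Laplacian on `ℝ × ℝ`. -/
noncomputable def lap (f : ℝ × ℝ → ℝ) : ℝ × ℝ → ℝ := fun x => pd1 (pd1 f) x + pd2 (pd2 f) x

section DirectionalDerivative

variable {E F : Type*} [NormedAddCommGroup E] [NormedSpace ℝ E]
  [NormedAddCommGroup F] [NormedSpace ℝ F]

/-- The directional derivative `x ↦ D f(x) v`, as an operator on functions so that it can be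
iterated; `pd1` and `pd2` are its instances along the two basis vectors of the plane. As with
`fderiv`, its value is `0` where `f` is not differentiable. -/
noncomputable def dirDeriv (v : E) (f : E → F) : E → F := fun x => fderiv ℝ f x v

lemma contDiff_dirDeriv {f : E → F} {n : WithTop ℕ∞} (hf : ContDiff ℝ (n + 1) f) (v : E) :
    ContDiff ℝ n (dirDeriv v f) :=
  (hf.fderiv_right le_rfl).clm_apply contDiff_const

lemma tsupport_dirDeriv_subset (v : E) (f : E → F) : tsupport (dirDeriv v f) ⊆ tsupport f :=
  tsupport_fderiv_apply_subset ℝ v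

lemma hasCompactSupport_dirDeriv {f : E → F} (hf : HasCompactSupport f) (v : E) :
    HasCompactSupport (dirDeriv v f) :=
  hf.fderiv_apply ℝ v

lemma continuous_dirDeriv {f : E → F} (hf : ContDiff ℝ 1 f) (v : E) :
    Continuous (dirDeriv v f) :=
  (contDiff_dirDeriv (n := 0) hf v).continuous

lemma continuous_dirDeriv_dirDeriv {f : E → F} (hf : ContDiff ℝ 2 f) (v w : E) :
    Continuous (dirDeriv v (dirDeriv w f)) :=
  continuous_dirDeriv (contDiff_dirDeriv (n := 1) hf w) v

lemma dirDeriv_eq_zero_of_notMem_tsupport {f : E → F} {x : E} (hx : x ∉ tsupport f) (v : E) :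
    dirDeriv v f x = 0 :=
  image_eq_zero_of_notMem_tsupport fun h => hx (tsupport_dirDeriv_subset v f h)

lemma dirDeriv_neg (v : E) (f : E → F) : dirDeriv v (-f) = -dirDeriv v f := by
  ext x
  simp [dirDeriv, fderiv_neg]

lemma dirDeriv_dirDeriv_eq_fderiv_fderiv {f : E → F} (hf : ContDiff ℝ 2 f) (v w x : E) :
    dirDeriv v (dirDeriv w f) x = fderiv ℝ (fderiv ℝ f) x v w := by
  have hdiff : DifferentiableAt ℝ (fderiv ℝ f) x :=
    (hf.fderiv_right (m := 1) le_rfl).differentiable one_ne_zero x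
  unfold dirDeriv
  simp [fderiv_clm_apply hdiff (differentiableAt_const w)]

lemma dirDeriv_comm {f : E → F} (hf : ContDiff ℝ 2 f) (v w : E) :
    dirDeriv v (dirDeriv w f) = dirDeriv w (dirDeriv v f) := by
  ext x
  have hsymm : IsSymmSndFDerivAt ℝ f x := hf.contDiffAt.isSymmSndFDerivAt (by simp)
  simpa only [dirDeriv_dirDeriv_eq_fderiv_fderiv hf] using hsymm.eq v w

lemma eq_zero_of_fderiv_eq_zero_of_hasCompactSupport [NoncompactSpace E] {f : E → F}
    (hf : Differentiable ℝ f) (hfc : HasCompactSupport f) (hderiv : ∀ x, fderiv ℝ f x = 0) :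
    f = 0 := by
  obtain ⟨y, hy⟩ := (Set.ne_univ_iff_exists_notMem _).mp hfc.isCompact.ne_univ
  ext x
  rw [is_const_of_fderiv_eq_zero hf hderiv x y, image_eq_zero_of_notMem_tsupport hy,
    Pi.zero_apply]

end DirectionalDerivative

lemma integrable_mul_of_hasCompactSupport_left {X : Type*} [TopologicalSpace X]
    [MeasurableSpace X] [OpensMeasurableSpace X] {μ : Measure X} [IsFiniteMeasureOnCompacts μ]
    {f g : X → ℝ} (hf : Continuous f) (hg : Continuous g) (hfc : HasCompactSupport f) :
    Integrable (fun x => f x * g x) μ :=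
  (hf.mul hg).integrable_of_hasCompactSupport hfc.mul_right

lemma integrable_dirDeriv_dirDeriv_mul {E : Type*} [NormedAddCommGroup E] [NormedSpace ℝ E]
    [MeasurableSpace E] [OpensMeasurableSpace E] {μ : Measure E} [IsFiniteMeasureOnCompacts μ]
    {f : E → ℝ} (hf : ContDiff ℝ 2 f) (hfc : HasCompactSupport f) (v w v' w' : E) :
    Integrable (fun x => dirDeriv v (dirDeriv w f) x * dirDeriv v' (dirDeriv w' f) x) μ :=
  integrable_mul_of_hasCompactSupport_left (continuous_dirDeriv_dirDeriv hf v w)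
    (continuous_dirDeriv_dirDeriv hf v' w')
    (hasCompactSupport_dirDeriv (hasCompactSupport_dirDeriv hfc w) v)

section IntegrationByParts

variable {E : Type*} [NormedAddCommGroup E] [NormedSpace ℝ E] [FiniteDimensional ℝ E]
  [MeasurableSpace E] [BorelSpace E] (μ : Measure E) [μ.IsAddHaarMeasure]

lemma integral_mul_dirDeriv_eq_neg {f g : E → ℝ} (hf : ContDiff ℝ 1 f) (hg : ContDiff ℝ 1 g)
    (hfc : HasCompactSupport f) (v : E) :
    ∫ x, f x * dirDeriv v g x ∂μ = -∫ x, dirDeriv v f x * g x ∂μ :=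
  integral_mul_fderiv_eq_neg_fderiv_mul_of_integrable
    (integrable_mul_of_hasCompactSupport_left (continuous_dirDeriv hf v) hg.continuous
      (hasCompactSupport_dirDeriv hfc v))
    (integrable_mul_of_hasCompactSupport_left hf.continuous (continuous_dirDeriv hg v) hfc)
    (integrable_mul_of_hasCompactSupport_left hf.continuous hg.continuous hfc)
    (fun x _ => hf.differentiable one_ne_zero x) (fun x _ => hg.differentiable one_ne_zero x)

lemma integral_dirDeriv_dirDeriv_mul_comm {f : E → ℝ} (hf : ContDiff ℝ 3 f)
    (hfc : HasCompactSupport f) (v w : E) :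
    ∫ x, dirDeriv v (dirDeriv v f) x * dirDeriv w (dirDeriv w f) x ∂μ =
      ∫ x, dirDeriv v (dirDeriv w f) x * dirDeriv w (dirDeriv v f) x ∂μ := by
  have hf2 : ContDiff ℝ 2 f := hf.of_le (by norm_num)
  have hC2 (z : E) : ContDiff ℝ 2 (dirDeriv z f) := contDiff_dirDeriv hf z
  have hC1 (y z : E) : ContDiff ℝ 1 (dirDeriv y (dirDeriv z f)) := contDiff_dirDeriv (hC2 z) y
  have hv : ContDiff ℝ 1 (dirDeriv v f) := (hC2 v).of_le one_le_two
  have hvc : HasCompactSupport (dirDeriv v f) := hasCompactSupport_dirDeriv hfc v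
  calc ∫ x, dirDeriv v (dirDeriv v f) x * dirDeriv w (dirDeriv w f) x ∂μ
      = -∫ x, dirDeriv v f x * dirDeriv v (dirDeriv w (dirDeriv w f)) x ∂μ := by
        rw [integral_mul_dirDeriv_eq_neg μ hv (hC1 w w) hvc v, neg_neg]
    _ = -∫ x, dirDeriv v f x * dirDeriv w (dirDeriv w (dirDeriv v f)) x ∂μ := by
        rw [dirDeriv_comm (hC2 w) v w, dirDeriv_comm hf2 v w]
    _ = ∫ x, dirDeriv v (dirDeriv w f) x * dirDeriv w (dirDeriv v f) x ∂μ := by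
        rw [integral_mul_dirDeriv_eq_neg μ hv (hC1 w v) hvc w, neg_neg, dirDeriv_comm hf2 v w]

end IntegrationByParts

lemma setIntegral_sq_add_sq_pos {X : Type*} [TopologicalSpace X] [MeasurableSpace X]
    [OpensMeasurableSpace X] (μ : Measure X) [μ.IsOpenPosMeasure] [IsFiniteMeasureOnCompacts μ]
    {s : Set X} {u : X → ℝ × ℝ} (hu : Continuous u) (huc : HasCompactSupport u)
    (hus : tsupport u ⊆ s) (hne : u ≠ 0) :
    0 < ∫ x in s, ((u x).1 ^ 2 + (u x).2 ^ 2) ∂μ := by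
  obtain ⟨x, hx⟩ := Function.ne_iff.mp hne
  have hvanish : ∀ y ∉ s, (u y).1 ^ 2 + (u y).2 ^ 2 = 0 := fun y hy => by
    simp [image_eq_zero_of_notMem_tsupport (fun h => hy (hus h))]
  have hx' : (u x).1 ^ 2 + (u x).2 ^ 2 ≠ 0 := fun h => hx <| by
    obtain ⟨h1, h2⟩ := (add_eq_zero_iff_of_nonneg (sq_nonneg _) (sq_nonneg _)).mp h
    exact Prod.ext (pow_eq_zero_iff two_ne_zero |>.mp h1) (pow_eq_zero_iff two_ne_zero |>.mp h2)
  have hcont : Continuous fun y => (u y).1 ^ 2 + (u y).2 ^ 2 := by fun_prop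
  rw [setIntegral_eq_integral_of_forall_compl_eq_zero hvanish]
  exact hcont.integral_pos_of_hasCompactSupport_nonneg_nonzero
    (huc.comp_left (g := fun p : ℝ × ℝ => p.1 ^ 2 + p.2 ^ 2) (by simp))
    (fun y => by positivity) hx'

section Plane

variable {f : ℝ × ℝ → ℝ}

lemma pd1_eq_dirDeriv : pd1 = dirDeriv (1, 0) := rfl

lemma pd2_eq_dirDeriv : pd2 = dirDeriv (0, 1) := rfl

lemma pd1_pd2_comm (hf : ContDiff ℝ 2 f) : pd1 (pd2 f) = pd2 (pd1 f) :=
  dirDeriv_comm hf (1, 0) (0, 1)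

/-- The determinant of the Hessian matrix of `f`; for `f` of class `C²` it is half the difference
between `(Δf)²` and the squared Frobenius norm of `D²f`. -/
noncomputable def hessDet (f : ℝ × ℝ → ℝ) : ℝ × ℝ → ℝ :=
  fun x => pd1 (pd1 f) x * pd2 (pd2 f) x - pd1 (pd2 f) x * pd2 (pd1 f) x

lemma hessDet_eq_zero_of_notMem_tsupport {x : ℝ × ℝ} (hx : x ∉ tsupport f) : hessDet f x = 0 := by
  have hx1 : x ∉ tsupport (dirDeriv (1, 0) f) := fun h => hx (tsupport_dirDeriv_subset _ f h)
  simp [hessDet, pd1_eq_dirDeriv, pd2_eq_dirDeriv, dirDeriv_eq_zero_of_notMem_tsupport hx1]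

lemma integrable_hessDet (hf : ContDiff ℝ 2 f) (hfc : HasCompactSupport f) :
    Integrable (hessDet f) :=
  (integrable_dirDeriv_dirDeriv_mul hf hfc (1, 0) (1, 0) (0, 1) (0, 1)).sub
    (integrable_dirDeriv_dirDeriv_mul hf hfc (1, 0) (0, 1) (0, 1) (1, 0))

lemma integral_hessDet_eq_zero (hf : ContDiff ℝ 3 f) (hfc : HasCompactSupport f) :
    ∫ x, hessDet f x = 0 := by
  have hf2 : ContDiff ℝ 2 f := hf.of_le (by norm_num)
  simp only [hessDet, pd1_eq_dirDeriv, pd2_eq_dirDeriv]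
  rw [integral_sub (integrable_dirDeriv_dirDeriv_mul hf2 hfc _ _ _ _)
      (integrable_dirDeriv_dirDeriv_mul hf2 hfc _ _ _ _),
    integral_dirDeriv_dirDeriv_mul_comm volume hf hfc, sub_self]

lemma integrable_sq_lap (hf : ContDiff ℝ 2 f) (hfc : HasCompactSupport f) :
    Integrable fun x => lap f x ^ 2 := by
  have hcont : Continuous (lap f) :=
    (continuous_dirDeriv_dirDeriv hf (1, 0) (1, 0)).add
      (continuous_dirDeriv_dirDeriv hf (0, 1) (0, 1))
  have hsupp : HasCompactSupport (lap f) :=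
    (hasCompactSupport_dirDeriv (hasCompactSupport_dirDeriv hfc (1, 0)) (1, 0)).add
      (hasCompactSupport_dirDeriv (hasCompactSupport_dirDeriv hfc (0, 1)) (0, 1))
  simpa only [sq] using integrable_mul_of_hasCompactSupport_left hcont hcont hsupp

/-- The rotated gradient `∇^⊥ f = (∂₂f, -∂₁f)`: the velocity field with stream function `f`. -/
noncomputable def perpGrad (f : ℝ × ℝ → ℝ) : ℝ × ℝ → ℝ × ℝ := fun x => (pd2 f x, -pd1 f x)

lemma fst_perpGrad (f : ℝ × ℝ → ℝ) : (fun x => (perpGrad f x).1) = pd2 f := rfl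

lemma snd_perpGrad (f : ℝ × ℝ → ℝ) : (fun x => (perpGrad f x).2) = -pd1 f := rfl

lemma contDiff_perpGrad {n : WithTop ℕ∞} (hf : ContDiff ℝ (n + 1) f) :
    ContDiff ℝ n (perpGrad f) :=
  (contDiff_dirDeriv hf (0, 1)).prodMk (contDiff_dirDeriv hf (1, 0)).neg

lemma tsupport_perpGrad_subset (f : ℝ × ℝ → ℝ) : tsupport (perpGrad f) ⊆ tsupport f := by
  refine closure_minimal (fun x hx => ?_) (isClosed_tsupport f)
  by_contra hxf
  exact hx (by simp [perpGrad, pd1_eq_dirDeriv, pd2_eq_dirDeriv,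
    dirDeriv_eq_zero_of_notMem_tsupport hxf])

lemma hasCompactSupport_perpGrad (hfc : HasCompactSupport f) : HasCompactSupport (perpGrad f) :=
  hfc.of_isClosed_subset (isClosed_tsupport _) (tsupport_perpGrad_subset f)

lemma perpGrad_ne_zero (hf : Differentiable ℝ f) (hfc : HasCompactSupport f) (hne : f ≠ 0) :
    perpGrad f ≠ 0 := by
  intro h
  refine hne (eq_zero_of_fderiv_eq_zero_of_hasCompactSupport hf hfc fun x => ?_)
  obtain ⟨h2, h1⟩ : pd2 f x = 0 ∧ pd1 f x = 0 := by
    simpa [perpGrad, Prod.ext_iff] using congrFun h x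
  ext
  · simpa [pd1] using h1
  · simpa [pd2] using h2

lemma div_perpGrad (hf : ContDiff ℝ 2 f) (x : ℝ × ℝ) :
    pd1 (fun y => (perpGrad f y).1) x + pd2 (fun y => (perpGrad f y).2) x = 0 := by
  rw [fst_perpGrad, snd_perpGrad, pd1_pd2_comm hf, pd2_eq_dirDeriv, dirDeriv_neg, Pi.neg_apply,
    add_neg_cancel]

lemma sq_norm_jacobian_perpGrad (hf : ContDiff ℝ 2 f) (x : ℝ × ℝ) :
    pd1 (fun y => (perpGrad f y).1) x ^ 2 + pd2 (fun y => (perpGrad f y).1) x ^ 2 +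
      pd1 (fun y => (perpGrad f y).2) x ^ 2 + pd2 (fun y => (perpGrad f y).2) x ^ 2 =
    lap f x ^ 2 - 2 * hessDet f x := by
  have h1 : pd1 (-pd1 f) x = -pd1 (pd1 f) x := congrFun (dirDeriv_neg (1, 0) (pd1 f)) x
  have h2 : pd2 (-pd1 f) x = -pd2 (pd1 f) x := congrFun (dirDeriv_neg (0, 1) (pd1 f)) x
  rw [fst_perpGrad, snd_perpGrad, h1, h2, lap, hessDet, pd1_pd2_comm hf]
  ring

lemma setIntegral_sq_norm_perpGrad (f : ℝ × ℝ → ℝ) (Ω : Set (ℝ × ℝ)) :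
    ∫ x in Ω, ((perpGrad f x).1 ^ 2 + (perpGrad f x).2 ^ 2) =
      ∫ x in Ω, (pd1 f x ^ 2 + pd2 f x ^ 2) := by
  simp only [perpGrad, neg_sq, add_comm]

lemma setIntegral_sq_norm_jacobian_perpGrad (hf : ContDiff ℝ 3 f) (hfc : HasCompactSupport f)
    {Ω : Set (ℝ × ℝ)} (hfΩ : tsupport f ⊆ Ω) :
    ∫ x in Ω, (pd1 (fun y => (perpGrad f y).1) x ^ 2 + pd2 (fun y => (perpGrad f y).1) x ^ 2 +
        pd1 (fun y => (perpGrad f y).2) x ^ 2 + pd2 (fun y => (perpGrad f y).2) x ^ 2) =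
      ∫ x in Ω, lap f x ^ 2 := by
  have hf2 : ContDiff ℝ 2 f := hf.of_le (by norm_num)
  have hdet : ∫ x in Ω, hessDet f x = 0 := by
    rw [setIntegral_eq_integral_of_forall_compl_eq_zero fun x hx =>
      hessDet_eq_zero_of_notMem_tsupport fun h => hx (hfΩ h), integral_hessDet_eq_zero hf hfc]
  simp only [sq_norm_jacobian_perpGrad hf2]
  rw [integral_sub (integrable_sq_lap hf2 hfc).integrableOn
      ((integrable_hessDet hf2 hfc).integrableOn.const_mul 2),
    integral_const_mul, hdet, mul_zero, sub_zero]

end Plane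

theorem stmt2_general {n : WithTop ℕ∞} (hn : 2 ≤ n) (Ω : Set (ℝ × ℝ))
    (ψ : ℝ × ℝ → ℝ) (hψ : ContDiff ℝ (n + 1) ψ) (hsupp : HasCompactSupport ψ)
    (hsub : tsupport ψ ⊆ Ω) (hne : ψ ≠ 0)
    (u : ℝ × ℝ → ℝ × ℝ) (hu : u = fun x => (pd2 ψ x, -pd1 ψ x)) :
    (ContDiff ℝ n u ∧ HasCompactSupport u ∧ tsupport u ⊆ Ω ∧ u ≠ 0 ∧
      ∀ x : ℝ × ℝ, pd1 (fun y => (u y).1) x + pd2 (fun y => (u y).2) x = 0) ∧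
    ((∫ x in Ω, ((u x).1 ^ 2 + (u x).2 ^ 2)) =
        ∫ x in Ω, ((pd1 ψ x) ^ 2 + (pd2 ψ x) ^ 2)) ∧
    (0 < ∫ x in Ω, ((u x).1 ^ 2 + (u x).2 ^ 2)) ∧
    ((∫ x in Ω,
        ((pd1 (fun y => (u y).1) x) ^ 2 + (pd2 (fun y => (u y).1) x) ^ 2 +
          (pd1 (fun y => (u y).2) x) ^ 2 + (pd2 (fun y => (u y).2) x) ^ 2)) =
      ∫ x in Ω, (lap ψ x) ^ 2) ∧
    ((∫ x in Ω,
        ((pd1 (fun y => (u y).1) x) ^ 2 + (pd2 (fun y => (u y).1) x) ^ 2 +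
          (pd1 (fun y => (u y).2) x) ^ 2 + (pd2 (fun y => (u y).2) x) ^ 2)) /
        (∫ x in Ω, ((u x).1 ^ 2 + (u x).2 ^ 2)) =
      (∫ x in Ω, (lap ψ x) ^ 2) / (∫ x in Ω, ((pd1 ψ x) ^ 2 + (pd2 ψ x) ^ 2))) := by
  obtain rfl : u = perpGrad ψ := hu
  have hψ3 : ContDiff ℝ 3 ψ := hψ.of_le (by simpa [two_add_one_eq_three] using add_le_add_left hn 1)
  have hψ2 : ContDiff ℝ 2 ψ := hψ3.of_le (by norm_num)
  have hu : ContDiff ℝ n (perpGrad ψ) := contDiff_perpGrad hψ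
  have huc : HasCompactSupport (perpGrad ψ) := hasCompactSupport_perpGrad hsupp
  have huΩ : tsupport (perpGrad ψ) ⊆ Ω := (tsupport_perpGrad_subset ψ).trans hsub
  have hu0 : perpGrad ψ ≠ 0 := perpGrad_ne_zero (hψ2.differentiable two_ne_zero) hsupp hne
  have hnorm := setIntegral_sq_norm_perpGrad ψ Ω
  have henergy := setIntegral_sq_norm_jacobian_perpGrad hψ3 hsupp hsub
  exact ⟨⟨hu, huc, huΩ, hu0, div_perpGrad hψ2⟩, hnorm,
    setIntegral_sq_add_sq_pos volume hu.continuous huc huΩ hu0, henergy, by rw [henergy, hnorm]⟩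

theorem stmt2 (Ω : Set (ℝ × ℝ)) (hΩ : IsOpen Ω)
    (ψ : ℝ × ℝ → ℝ) (hψ : ContDiff ℝ (⊤ : ℕ∞) ψ) (hsupp : HasCompactSupport ψ)
    (hsub : tsupport ψ ⊆ Ω) (hne : ψ ≠ 0)
    (u : ℝ × ℝ → ℝ × ℝ) (hu : u = fun x => (pd2 ψ x, - pd1 ψ x)) :
    -- (i) regularity, support, nontriviality, and the divergence-free condition
    (ContDiff ℝ (⊤ : ℕ∞) u ∧ HasCompactSupport u ∧ tsupport u ⊆ Ω ∧ u ≠ 0 ∧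
      ∀ x : ℝ × ℝ, pd1 (fun y => (u y).1) x + pd2 (fun y => (u y).2) x = 0) ∧
    -- (ii) equality of the L² norms, and positivity
    ((∫ x in Ω, ((u x).1 ^ 2 + (u x).2 ^ 2)) =
        ∫ x in Ω, ((pd1 ψ x) ^ 2 + (pd2 ψ x) ^ 2)) ∧
    (0 < ∫ x in Ω, ((u x).1 ^ 2 + (u x).2 ^ 2)) ∧
    -- (iii) equality of the Dirichlet energies and of the Rayleigh quotients
    ((∫ x in Ω,
        ((pd1 (fun y => (u y).1) x) ^ 2 + (pd2 (fun y => (u y).1) x) ^ 2 +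
          (pd1 (fun y => (u y).2) x) ^ 2 + (pd2 (fun y => (u y).2) x) ^ 2)) =
      ∫ x in Ω, (lap ψ x) ^ 2) ∧
    ((∫ x in Ω,
        ((pd1 (fun y => (u y).1) x) ^ 2 + (pd2 (fun y => (u y).1) x) ^ 2 +
          (pd1 (fun y => (u y).2) x) ^ 2 + (pd2 (fun y => (u y).2) x) ^ 2)) /
        (∫ x in Ω, ((u x).1 ^ 2 + (u x).2 ^ 2)) =
      (∫ x in Ω, (lap ψ x) ^ 2) / (∫ x in Ω, ((pd1 ψ x) ^ 2 + (pd2 ψ x) ^ 2))) :=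
  stmt2_general (n := (⊤ : ℕ∞)) (WithTop.coe_le_coe.mpr le_top) Ω ψ hψ hsupp hsub hne u hu
end

section
/- Let Ω ⊆ ℝ² be open, λ ∈ ℝ, let ψ : ℝ² → ℝ and p : ℝ² → ℝ be smooth on Ω, set u = (∂₂ψ, −∂₁ψ), and assume Δu + λu = ∇p on Ω (componentwise). Define h := Δψ + λψ. Then ∂₁p = ∂₂h and ∂₂p = −∂₁h on Ω, and consequently the function F : ℂ → ℂ defined by F(z) = p(Re z, Im z) + i·h(Re z, Im z) is complex-differentiable at every point z with (Re z, Im z) ∈ Ω. -/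
open MeasureTheory

/-!
The operator `Δ + λ` has constant coefficients, so it commutes with every directional derivative.
The components of `u = (∂₂ψ, -∂₁ψ)` are the derivatives of `ψ` in the directions `(0, 1)` and
`(-1, 0)`, so `Δu + λu` consists of the derivatives of `h = Δψ + λψ` in these two directions, and
equating it with `∇p` gives the Cauchy–Riemann equations for `p + i h`.
-/

section DirectionalDerivatives

variable {𝕜 E F : Type*} [NontriviallyNormedField 𝕜] [NormedAddCommGroup E] [NormedSpace 𝕜 E]
  [NormedAddCommGroup F] [NormedSpace 𝕜 F] {f : E → F} {x : E}

lemma contDiffAt_fderiv_apply {m n : WithTop ℕ∞} (hf : ContDiffAt 𝕜 n f x) (hmn : m + 1 ≤ n)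
    (v : E) : ContDiffAt 𝕜 m (fun y => fderiv 𝕜 f y v) x :=
  (hf.fderiv_right hmn).clm_apply contDiffAt_const

lemma differentiableAt_fderiv_fderiv_apply (hf : ContDiffAt 𝕜 3 f x) (v w : E) :
    DifferentiableAt 𝕜 (fun y => fderiv 𝕜 (fun y' => fderiv 𝕜 f y' v) y w) x :=
  (contDiffAt_fderiv_apply (contDiffAt_fderiv_apply hf two_add_one_eq_three.le v)
    one_add_one_eq_two.le w).differentiableAt one_ne_zero

lemma fderiv_fderiv_apply_comm (hf : ContDiffAt 𝕜 (minSmoothness 𝕜 2) f x) (v w : E) :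
    fderiv 𝕜 (fun y => fderiv 𝕜 f y v) x w = fderiv 𝕜 (fun y => fderiv 𝕜 f y w) x v := by
  have hd : DifferentiableAt 𝕜 (fderiv 𝕜 f) x :=
    ((hf.of_le le_minSmoothness).fderiv_right (m := 1) one_add_one_eq_two.le).differentiableAt
      one_ne_zero
  have fderiv_apply (a b : E) :
      fderiv 𝕜 (fun y => fderiv 𝕜 f y a) x b = fderiv 𝕜 (fderiv 𝕜 f) x b a := by
    simp [fderiv_clm_apply hd (differentiableAt_const a)]
  rw [fderiv_apply, fderiv_apply, (hf.isSymmSndFDerivAt le_rfl).eq]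

lemma fderiv_fderiv_fderiv_apply_comm (hf : ContDiffAt 𝕜 (minSmoothness 𝕜 3) f x) (v w₁ w₂ : E) :
    fderiv 𝕜 (fun y => fderiv 𝕜 (fun y' => fderiv 𝕜 f y' v) y w₁) x w₂ =
      fderiv 𝕜 (fun y => fderiv 𝕜 (fun y' => fderiv 𝕜 f y' w₁) y w₂) x v := by
  have hsucc : minSmoothness 𝕜 2 + 1 ≤ minSmoothness 𝕜 3 := by
    rw [← minSmoothness_add, two_add_one_eq_three]
  have hcomm : (fun y => fderiv 𝕜 (fun y' => fderiv 𝕜 f y' v) y w₁) =ᶠ[nhds x]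
      fun y => fderiv 𝕜 (fun y' => fderiv 𝕜 f y' w₁) y v :=
    ((hf.of_le (le_self_add.trans hsucc)).eventually (by simp)).mono
      fun y hy => fderiv_fderiv_apply_comm hy v w₁
  rw [hcomm.fderiv_eq, fderiv_fderiv_apply_comm (contDiffAt_fderiv_apply hf hsucc w₁)]

end DirectionalDerivatives

section Laplacian

variable {f : ℝ × ℝ → ℝ} {x : ℝ × ℝ}

lemma differentiableAt_lap (hf : ContDiffAt ℝ 3 f x) : DifferentiableAt ℝ (lap f) x :=
  (differentiableAt_fderiv_fderiv_apply hf (1, 0) (1, 0)).add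
    (differentiableAt_fderiv_fderiv_apply hf (0, 1) (0, 1))

lemma lap_fderiv_apply (hf : ContDiffAt ℝ 3 f x) (v : ℝ × ℝ) :
    lap (fun y => fderiv ℝ f y v) x = fderiv ℝ (lap f) x v := by
  have hcomm (w : ℝ × ℝ) :
      fderiv ℝ (fun y => fderiv ℝ (fun y' => fderiv ℝ f y' v) y w) x w =
        fderiv ℝ (fun y => fderiv ℝ (fun y' => fderiv ℝ f y' w) y w) x v :=
    fderiv_fderiv_fderiv_apply_comm (by simpa using hf) v w w
  have hadd : fderiv ℝ (lap f) x = fderiv ℝ (pd1 (pd1 f)) x + fderiv ℝ (pd2 (pd2 f)) x :=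
    fderiv_add (differentiableAt_fderiv_fderiv_apply hf (1, 0) (1, 0))
      (differentiableAt_fderiv_fderiv_apply hf (0, 1) (0, 1))
  calc lap (fun y => fderiv ℝ f y v) x
      = fderiv ℝ (pd1 (pd1 f)) x v + fderiv ℝ (pd2 (pd2 f)) x v :=
        congrArg₂ (· + ·) (hcomm (1, 0)) (hcomm (0, 1))
    _ = fderiv ℝ (lap f) x v := by rw [hadd, add_apply]

lemma differentiableAt_lap_add_const_mul (hf : ContDiffAt ℝ 3 f x) (c : ℝ) :
    DifferentiableAt ℝ (fun y => lap f y + c * f y) x :=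
  (differentiableAt_lap hf).add ((hf.differentiableAt three_ne_zero).const_mul c)

lemma lap_fderiv_apply_add_const_mul (hf : ContDiffAt ℝ 3 f x) (c : ℝ) (v : ℝ × ℝ) :
    lap (fun y => fderiv ℝ f y v) x + c * fderiv ℝ f x v =
      fderiv ℝ (fun y => lap f y + c * f y) x v := by
  have hf' : DifferentiableAt ℝ f x := hf.differentiableAt three_ne_zero
  rw [fderiv_fun_add (differentiableAt_lap hf) (hf'.const_mul c), fderiv_const_mul hf',
    lap_fderiv_apply hf, add_apply, smul_apply, smul_eq_mul]

end Laplacian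

lemma neg_pd1_eq_fderiv (f : ℝ × ℝ → ℝ) (x : ℝ × ℝ) : -pd1 f x = fderiv ℝ f x (-1, 0) := by
  simp [pd1, ← map_neg]

lemma differentiableAt_complex_iff_cauchyRiemann {a b : ℝ × ℝ → ℝ} {z : ℂ}
    (ha : DifferentiableAt ℝ a (z.re, z.im)) (hb : DifferentiableAt ℝ b (z.re, z.im)) :
    DifferentiableAt ℂ
        (fun w : ℂ => (a (w.re, w.im) : ℂ) + Complex.I * (b (w.re, w.im) : ℂ)) z ↔
      pd1 a (z.re, z.im) = pd2 b (z.re, z.im) ∧ pd2 a (z.re, z.im) = -pd1 b (z.re, z.im) := by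
  have hcoord : HasFDerivAt (fun w : ℂ => (w.re, w.im)) (Complex.reCLM.prod Complex.imCLM) z :=
    (Complex.reCLM.prod Complex.imCLM).hasFDerivAt
  have hF : HasFDerivAt
      (fun w : ℂ => (a (w.re, w.im) : ℂ) + Complex.I * (b (w.re, w.im) : ℂ)) _ z :=
    (Complex.ofRealCLM.hasFDerivAt.comp z (ha.hasFDerivAt.comp z hcoord)).add
      ((Complex.ofRealCLM.hasFDerivAt.comp z (hb.hasFDerivAt.comp z hcoord)).const_mul Complex.I)
  rw [differentiableAt_complex_iff_differentiableAt_real, and_iff_right hF.differentiableAt,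
    hF.fderiv, Complex.ext_iff]
  simp [pd1, pd2, and_comm, eq_comm]

theorem stmt8_general {c : ℝ} {ψ p : ℝ × ℝ → ℝ} {x : ℝ × ℝ} (hψ : ContDiffAt ℝ 3 ψ x)
    (hp : DifferentiableAt ℝ p x) {u : ℝ × ℝ → ℝ × ℝ} (hu : u = fun y => (pd2 ψ y, -pd1 ψ y))
    (heq : lap (fun y => (u y).1) x + c * (u x).1 = pd1 p x ∧
      lap (fun y => (u y).2) x + c * (u x).2 = pd2 p x)
    {h : ℝ × ℝ → ℝ} (hh : h = fun y => lap ψ y + c * ψ y) :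
    (pd1 p x = pd2 h x ∧ pd2 p x = -pd1 h x) ∧
      DifferentiableAt ℂ
        (fun w : ℂ => (p (w.re, w.im) : ℂ) + Complex.I * (h (w.re, w.im) : ℂ)) ⟨x.1, x.2⟩ := by
  subst hu hh
  obtain ⟨heq₁, heq₂⟩ := heq
  simp only [neg_pd1_eq_fderiv] at heq₂
  have hCR₁ : pd1 p x = pd2 (fun y => lap ψ y + c * ψ y) x :=
    heq₁.symm.trans (lap_fderiv_apply_add_const_mul hψ c (0, 1))
  have hCR₂ : pd2 p x = -pd1 (fun y => lap ψ y + c * ψ y) x := by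
    rw [neg_pd1_eq_fderiv, ← heq₂, lap_fderiv_apply_add_const_mul hψ]
  exact ⟨⟨hCR₁, hCR₂⟩, (differentiableAt_complex_iff_cauchyRiemann (z := ⟨x.1, x.2⟩) hp
    (differentiableAt_lap_add_const_mul hψ c)).2 ⟨hCR₁, hCR₂⟩⟩

theorem stmt8 (Ω : Set (ℝ × ℝ)) (hΩ : IsOpen Ω) (lam : ℝ)
    (ψ : ℝ × ℝ → ℝ) (p : ℝ × ℝ → ℝ)
    (hψ : ContDiffOn ℝ (⊤ : ℕ∞) ψ Ω) (hp : ContDiffOn ℝ (⊤ : ℕ∞) p Ω)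
    (u : ℝ × ℝ → ℝ × ℝ) (hu : u = fun x => (pd2 ψ x, - pd1 ψ x))
    (heq : ∀ x ∈ Ω,
      lap (fun y => (u y).1) x + lam * (u x).1 = pd1 p x ∧
      lap (fun y => (u y).2) x + lam * (u x).2 = pd2 p x)
    (h : ℝ × ℝ → ℝ) (hh : h = fun x => lap ψ x + lam * ψ x) :
    (∀ x ∈ Ω, pd1 p x = pd2 h x ∧ pd2 p x = - pd1 h x) ∧
    ∀ z : ℂ, (z.re, z.im) ∈ Ω →
      DifferentiableAt ℂ
        (fun w : ℂ => (p (w.re, w.im) : ℂ) + Complex.I * (h (w.re, w.im) : ℂ)) z := by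
  have hpoint (x) (hx : x ∈ Ω) := stmt8_general
    ((hψ.contDiffAt (hΩ.mem_nhds hx)).of_le ENat.LEInfty.out)
    ((hp.contDiffAt (hΩ.mem_nhds hx)).differentiableAt (by simp)) hu (heq x hx) hh
  exact ⟨fun x hx => (hpoint x hx).1, fun z hz => (hpoint _ hz).2⟩
end

section
/- Let Ω ⊆ ℝ² be open and connected, let λ ∈ ℝ, let ψ : ℝ² → ℝ be smooth on Ω, set u = (∂₂ψ, −∂₁ψ), assume Δu + λu = 0 on Ω (componentwise), and let c ∈ ℝ be such that Δψ + λψ = c on Ω. Then the convective term is a gradient on Ω: for i = 1, 2 and all x ∈ Ω, (u₁ ∂₁uᵢ + u₂ ∂₂uᵢ)(x) = ∂ᵢ( |u|²/2 + λψ²/2 − cψ )(x). -/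
open MeasureTheory

/-! For every differentiable plane field, `(u · ∇)u = ∇(|u|²/2) + ω (-u₂, u₁)` with
`ω = ∂₁u₂ - ∂₂u₁`. If `u = (∂₂ψ, -∂₁ψ)`, then `(-u₂, u₁) = ∇ψ` and `ω = -Δψ`. So as soon as
`-Δψ = G'(ψ)`, the last term is `∇(G ∘ ψ)`; here `-Δψ = lam ψ - c`, so
`G(s) = lam s²/2 - c s`. -/

/-- The velocity field `∇^⊥ψ` of the stream function `ψ`, with the sign convention
`(∂₂ψ, -∂₁ψ)`. -/
noncomputable def streamVelocity (ψ : ℝ × ℝ → ℝ) : ℝ × ℝ → ℝ × ℝ :=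
  fun x => (pd2 ψ x, -pd1 ψ x)

/-- The convective derivative `(u · ∇)f` of a scalar `f` along the field `u`; the convective term
of the Navier–Stokes equations is obtained by applying it to the components of `u`. -/
noncomputable def convectiveDeriv (u : ℝ × ℝ → ℝ × ℝ) (f : ℝ × ℝ → ℝ) : ℝ × ℝ → ℝ :=
  fun x => (u x).1 * pd1 f x + (u x).2 * pd2 f x

/-- The kinetic energy density `|u|²/2`. It is written in coordinates because the norm of `ℝ × ℝ`
is the sup norm. -/
noncomputable def kineticEnergy (u : ℝ × ℝ → ℝ × ℝ) : ℝ × ℝ → ℝ :=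
  fun x => ((u x).1 ^ 2 + (u x).2 ^ 2) / 2

/-- The scalar vorticity `∂₁u₂ - ∂₂u₁`, which measures how far the convective term of `u` is from
the gradient of the kinetic energy. -/
noncomputable def vorticity (u : ℝ × ℝ → ℝ × ℝ) : ℝ × ℝ → ℝ :=
  fun x => pd1 (fun y => (u y).2) x - pd2 (fun y => (u y).1) x

section PartialDerivatives

variable {f g : ℝ × ℝ → ℝ} {x : ℝ × ℝ}

theorem pd1_add (hf : DifferentiableAt ℝ f x) (hg : DifferentiableAt ℝ g x) :
    pd1 (fun y => f y + g y) x = pd1 f x + pd1 g x := by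
  simp only [pd1, fderiv_fun_add hf hg, add_apply]

theorem pd2_add (hf : DifferentiableAt ℝ f x) (hg : DifferentiableAt ℝ g x) :
    pd2 (fun y => f y + g y) x = pd2 f x + pd2 g x := by
  simp only [pd2, fderiv_fun_add hf hg, add_apply]

theorem pd1_neg : pd1 (fun y => -f y) x = -pd1 f x := by
  simp only [pd1, fderiv_fun_neg, neg_apply]

theorem pd1_comp {G : ℝ → ℝ} {G' : ℝ} (hG : HasDerivAt G G' (f x)) (hf : DifferentiableAt ℝ f x) :
    pd1 (fun y => G (f y)) x = G' * pd1 f x := by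
  have h : HasFDerivAt (fun y => G (f y)) (G' • fderiv ℝ f x) x :=
    hG.comp_hasFDerivAt x hf.hasFDerivAt
  simp only [pd1, h.fderiv, smul_apply, smul_eq_mul]

theorem pd2_comp {G : ℝ → ℝ} {G' : ℝ} (hG : HasDerivAt G G' (f x)) (hf : DifferentiableAt ℝ f x) :
    pd2 (fun y => G (f y)) x = G' * pd2 f x := by
  have h : HasFDerivAt (fun y => G (f y)) (G' • fderiv ℝ f x) x :=
    hG.comp_hasFDerivAt x hf.hasFDerivAt
  simp only [pd2, h.fderiv, smul_apply, smul_eq_mul]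

end PartialDerivatives

section PlaneFields

variable {u : ℝ × ℝ → ℝ × ℝ} {x : ℝ × ℝ}

theorem hasFDerivAt_kineticEnergy (hu : DifferentiableAt ℝ u x) :
    HasFDerivAt (kineticEnergy u)
      ((u x).1 • fderiv ℝ (fun y => (u y).1) x + (u x).2 • fderiv ℝ (fun y => (u y).2) x) x := by
  have h : HasFDerivAt (kineticEnergy u) _ x :=
    ((hu.fst.hasFDerivAt.pow 2).add (hu.snd.hasFDerivAt.pow 2)).mul_const (2⁻¹ : ℝ)
  refine h.congr_fderiv ?_
  module

theorem convectiveDeriv_fst (hu : DifferentiableAt ℝ u x) :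
    convectiveDeriv u (fun y => (u y).1) x =
      pd1 (kineticEnergy u) x - vorticity u x * (u x).2 := by
  have hE : pd1 (kineticEnergy u) x =
      (u x).1 * pd1 (fun y => (u y).1) x + (u x).2 * pd1 (fun y => (u y).2) x := by
    rw [pd1, (hasFDerivAt_kineticEnergy hu).fderiv]
    rfl
  rw [hE, convectiveDeriv, vorticity]
  ring

theorem convectiveDeriv_snd (hu : DifferentiableAt ℝ u x) :
    convectiveDeriv u (fun y => (u y).2) x =
      pd2 (kineticEnergy u) x + vorticity u x * (u x).1 := by
  have hE : pd2 (kineticEnergy u) x =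
      (u x).1 * pd2 (fun y => (u y).1) x + (u x).2 * pd2 (fun y => (u y).2) x := by
    rw [pd2, (hasFDerivAt_kineticEnergy hu).fderiv]
    rfl
  rw [hE, convectiveDeriv, vorticity]
  ring

end PlaneFields

theorem hasDerivAt_mul_sq_div_two_sub_mul (a b s : ℝ) :
    HasDerivAt (fun t => a * t ^ 2 / 2 - b * t) (a * s - b) s := by
  have h := (((hasDerivAt_pow 2 s).const_mul a).div_const 2).sub ((hasDerivAt_id s).const_mul b)
  refine h.congr_deriv ?_
  ring

section StreamFunction

variable {ψ : ℝ × ℝ → ℝ} {x : ℝ × ℝ}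

theorem differentiableAt_streamVelocity (hψ : ContDiffAt ℝ 2 ψ x) :
    DifferentiableAt ℝ (streamVelocity ψ) x := by
  have h : DifferentiableAt ℝ (fderiv ℝ ψ) x :=
    (hψ.fderiv_right (m := 1) (by norm_num)).differentiableAt one_ne_zero
  exact (h.clm_apply (differentiableAt_const _)).prodMk
    (h.clm_apply (differentiableAt_const _)).neg

theorem vorticity_streamVelocity (ψ : ℝ × ℝ → ℝ) (x : ℝ × ℝ) :
    vorticity (streamVelocity ψ) x = -lap ψ x := by
  simp only [vorticity, streamVelocity, pd1_neg, lap]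
  ring

theorem stmt11_general {G : ℝ → ℝ} (hψ : ContDiffAt ℝ 2 ψ x)
    (hG : HasDerivAt G (-lap ψ x) (ψ x)) :
    convectiveDeriv (streamVelocity ψ) (fun y => (streamVelocity ψ y).1) x =
        pd1 (fun y => kineticEnergy (streamVelocity ψ) y + G (ψ y)) x ∧
      convectiveDeriv (streamVelocity ψ) (fun y => (streamVelocity ψ y).2) x =
        pd2 (fun y => kineticEnergy (streamVelocity ψ) y + G (ψ y)) x := by
  have hu := differentiableAt_streamVelocity hψ
  have hE := (hasFDerivAt_kineticEnergy hu).differentiableAt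
  have hψ' : DifferentiableAt ℝ ψ x := hψ.differentiableAt two_ne_zero
  have hGψ : DifferentiableAt ℝ (fun y => G (ψ y)) x := hG.differentiableAt.comp x hψ'
  constructor
  · rw [convectiveDeriv_fst hu, vorticity_streamVelocity, pd1_add hE hGψ, pd1_comp hG hψ',
      streamVelocity]
    ring
  · rw [convectiveDeriv_snd hu, vorticity_streamVelocity, pd2_add hE hGψ, pd2_comp hG hψ',
      streamVelocity]

end StreamFunction

theorem stmt11 (Ω : Set (ℝ × ℝ)) (hΩ : IsOpen Ω) (hconn : IsConnected Ω) (lam : ℝ)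
    (ψ : ℝ × ℝ → ℝ) (hψ : ContDiffOn ℝ (⊤ : ℕ∞) ψ Ω)
    (u : ℝ × ℝ → ℝ × ℝ) (hu : u = fun x => (pd2 ψ x, - pd1 ψ x))
    (heq : ∀ x ∈ Ω,
      lap (fun y => (u y).1) x + lam * (u x).1 = 0 ∧
      lap (fun y => (u y).2) x + lam * (u x).2 = 0)
    (c : ℝ) (hc : ∀ x ∈ Ω, lap ψ x + lam * ψ x = c) :
    ∀ x ∈ Ω,
      ((u x).1 * pd1 (fun y => (u y).1) x + (u x).2 * pd2 (fun y => (u y).1) x =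
        pd1 (fun y => ((u y).1 ^ 2 + (u y).2 ^ 2) / 2 + lam * (ψ y) ^ 2 / 2 - c * ψ y) x) ∧
      ((u x).1 * pd1 (fun y => (u y).2) x + (u x).2 * pd2 (fun y => (u y).2) x =
        pd2 (fun y => ((u y).1 ^ 2 + (u y).2 ^ 2) / 2 + lam * (ψ y) ^ 2 / 2 - c * ψ y) x) := by
  intro x hx
  have hψx : ContDiffAt ℝ 2 ψ x :=
    (hψ.contDiffAt (hΩ.mem_nhds hx)).of_le (by norm_cast)
  have hG : HasDerivAt (fun s => lam * s ^ 2 / 2 - c * s) (-lap ψ x) (ψ x) :=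
    (hasDerivAt_mul_sq_div_two_sub_mul lam c (ψ x)).congr_deriv (by linarith [hc x hx])
  subst hu
  simp only [add_sub_assoc]
  exact stmt11_general hψx hG
end
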